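/- Define T : ℝ → ℝ by T(x) = Σ_{k=0}^{∞} 2^{-k} · dist(2^k · x, ℤ), where dist(y, ℤ) is the distance from y to the nearest integer. Then T is continuous on ℝ but nowhere differentiable: for every x ∈ ℝ, T is not differentiable at x. -/

import Mathlib

/-- The Takagi-type function `T(x) = Σ_{k=0}^{∞} 2^{-k} dist(2^k x, ℤ)`. -/
noncomputable def takagi (x : ℝ) : ℝ :=
  ∑' k : ℕ, (2 : ℝ) ^ (-(k : ℤ)) *
    Metric.infDist (((2 : ℝ) ^ k) * x) (Set.range ((↑) : ℤ → ℝ))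

/-!
A function differentiable at `x` has second differences `f (c + h) + f (c - h) - 2 f c = o(h)` as
`h → 0`, as long as the center `c` stays within `O(h)` of `x`. For the Takagi function, let
`c ± h` be the endpoints of the dyadic interval of length `2⁻ⁿ` around `x`. The terms `k < n` are
concave on it, the term `k = n` contributes exactly `-2h`, and the terms `k > n` vanish at
`c - h`, `c` and `c + h`, so the second difference is at most `-2h`. The equation
`T(x) = dist(x, ℤ) + T(2x) / 2` turns this bound into an induction on `n`.
-/

open Filter Asymptotics Set
open scoped Topology

/-- The symmetric second difference of `f` at center `c` with step `h`. Since it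
annihilates affine functions, its size compared with `h` detects non-differentiability. -/
def secondDiff {E F : Type*} [AddGroup E] [AddGroup F] (f : E → F) (c h : E) : F :=
  f (c + h) + f (c - h) - 2 • f c

section Differentiable

variable {𝕜 E F ι : Type*} [NontriviallyNormedField 𝕜] [NormedAddCommGroup E] [NormedSpace 𝕜 E]
  [NormedAddCommGroup F] [NormedSpace 𝕜 F] {f : E → F} {x : E} {l : Filter ι}

theorem isLittleO_of_hasFDerivAt_of_isBigO {G : Type*} [NormedAddCommGroup G] {f' : E →L[𝕜] F}
    {y : ι → E} {h : ι → G} (hf : HasFDerivAt f f' x) (hh : Tendsto h l (𝓝 0))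
    (hy : (fun i ↦ y i - x) =O[l] h) :
    (fun i ↦ f (y i) - f x - f' (y i - x)) =o[l] h := by
  have hyx : Tendsto y l (𝓝 x) := tendsto_sub_nhds_zero_iff.mp (hy.trans_tendsto hh)
  exact (hf.isLittleO.comp_tendsto hyx).trans_isBigO hy

theorem isLittleO_secondDiff_of_differentiableAt {c h : ι → E} (hf : DifferentiableAt 𝕜 f x)
    (hh : Tendsto h l (𝓝 0)) (hc : (fun i ↦ c i - x) =O[l] h) :
    (fun i ↦ secondDiff f (c i) (h i)) =o[l] h := by
  have hadd : (fun i ↦ c i + h i - x) =O[l] h :=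
    (hc.add (isBigO_refl h l)).congr_left fun i ↦ by abel
  have hsub : (fun i ↦ c i - h i - x) =O[l] h :=
    (hc.sub (isBigO_refl h l)).congr_left fun i ↦ by abel
  have expand {y : ι → E} (hy : (fun i ↦ y i - x) =O[l] h) :=
    isLittleO_of_hasFDerivAt_of_isBigO hf.hasFDerivAt hh hy
  refine (((expand hadd).add (expand hsub)).sub ((expand hc).add (expand hc))).congr_left
    fun i ↦ ?_
  simp only [secondDiff, map_sub, map_add]
  abel

end Differentiable

theorem secondDiff_nonpos_of_concaveOn {E : Type*} [AddCommGroup E] [Module ℝ E] {s : Set E}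
    {f : E → ℝ} {c h : E} (hf : ConcaveOn ℝ s f) (hsub : c - h ∈ s) (hadd : c + h ∈ s) :
    secondDiff f c h ≤ 0 := by
  have hmid : (1 / 2 : ℝ) • (c - h) + (1 / 2 : ℝ) • (c + h) = c := by module
  have hhalf : (0 : ℝ) ≤ 1 / 2 := by norm_num
  have hle := hf.2 hsub hadd hhalf hhalf (add_halves 1)
  rw [hmid, smul_eq_mul, smul_eq_mul] at hle
  rw [secondDiff, two_nsmul]
  linarith

/-- The distance from a real number to the nearest integer, whose rescalings are the terms of the
Takagi series. It is the `infDist` in the definition of `takagi`, so the two agree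
definitionally. -/
noncomputable def distInt (y : ℝ) : ℝ :=
  Metric.infDist y (range ((↑) : ℤ → ℝ))

theorem continuous_distInt : Continuous distInt :=
  Metric.continuous_infDist_pt _

theorem distInt_nonneg (y : ℝ) : 0 ≤ distInt y :=
  Metric.infDist_nonneg

theorem distInt_intCast (m : ℤ) : distInt m = 0 :=
  Metric.infDist_zero_of_mem (mem_range_self m)

theorem distInt_eq_abs_sub_round (y : ℝ) : distInt y = |y - round y| := by
  refine le_antisymm (Metric.infDist_le_dist_of_mem (mem_range_self (round y))) ?_
  refine (Metric.le_infDist (range_nonempty _)).mpr ?_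
  rintro _ ⟨m, rfl⟩
  exact round_le y m

theorem distInt_le_half (y : ℝ) : distInt y ≤ 1 / 2 :=
  (distInt_eq_abs_sub_round y).trans_le (abs_sub_round y)

theorem distInt_eq_min {j : ℤ} {y : ℝ} (hy : y ∈ Icc (j : ℝ) (j + 1)) :
    distInt y = min (y - j) (j + 1 - y) := by
  rcases hy.2.eq_or_lt with rfl | hlt
  · simpa using distInt_intCast (j + 1)
  · have hfloor : ⌊y⌋ = j := Int.floor_eq_iff.mpr ⟨hy.1, hlt⟩
    rw [distInt_eq_abs_sub_round, abs_sub_round_eq_min, Int.fract, hfloor]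
    ring_nf

theorem distInt_intCast_add_half (m : ℤ) : distInt (m + 1 / 2) = 1 / 2 := by
  rw [distInt_eq_min (j := m) ⟨by linarith, by linarith⟩]
  norm_num [add_sub_add_left_eq_sub]

theorem concaveOn_distInt (j : ℤ) : ConcaveOn ℝ (Icc (j : ℝ) (j + 1)) distInt := by
  have hconvex : Convex ℝ (Icc (j : ℝ) (j + 1)) := convex_Icc _ _
  have hleft : ConcaveOn ℝ (Icc (j : ℝ) (j + 1)) fun y ↦ y - j :=
    (concaveOn_id hconvex).sub (convexOn_const (j : ℝ) hconvex)
  have hright : ConcaveOn ℝ (Icc (j : ℝ) (j + 1)) fun y ↦ j + 1 - y :=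
    (concaveOn_const ((j : ℝ) + 1) hconvex).sub (convexOn_id hconvex)
  exact (hleft.inf hright).congr fun y hy ↦ (distInt_eq_min hy).symm

theorem exists_Icc_div_subset_Icc_intCast (m : ℤ) {q : ℕ} (hq : 0 < q) :
    ∃ j : ℤ, Icc ((m : ℝ) / q) ((m + 1) / q) ⊆ Icc (j : ℝ) (j + 1) := by
  have hqℤ : (0 : ℤ) < q := by exact_mod_cast hq
  have hqℝ : (0 : ℝ) < q := by exact_mod_cast hq
  refine ⟨m / q, Icc_subset_Icc ((le_div_iff₀ hqℝ).mpr ?_) ((div_le_iff₀ hqℝ).mpr ?_)⟩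
  · exact_mod_cast Int.ediv_mul_le m hqℤ.ne'
  · exact_mod_cast Int.lt_ediv_add_one_mul_self m hqℤ

theorem secondDiff_distInt_nonpos (m : ℤ) {q : ℕ} (hq : 0 < q) :
    secondDiff distInt ((m + 1 / 2) / q) (1 / 2 / q) ≤ 0 := by
  obtain ⟨j, hj⟩ := exists_Icc_div_subset_Icc_intCast m hq
  have hle : (m : ℝ) / q ≤ (m + 1) / q := by gcongr; linarith
  refine secondDiff_nonpos_of_concaveOn (concaveOn_distInt j) ?_ ?_
  · convert hj (left_mem_Icc.mpr hle) using 1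
    ring
  · convert hj (right_mem_Icc.mpr hle) using 1
    ring

theorem takagi_eq_tsum_distInt (x : ℝ) :
    takagi x = ∑' k : ℕ, (1 / 2) ^ k * distInt (2 ^ k * x) := by
  simp only [takagi, distInt, zpow_neg, zpow_natCast, one_div, inv_pow]

theorem norm_half_pow_mul_distInt_le (k : ℕ) (x : ℝ) :
    ‖(1 / 2) ^ k * distInt (2 ^ k * x)‖ ≤ (1 / 2) ^ k := by
  rw [Real.norm_of_nonneg (mul_nonneg (by positivity) (distInt_nonneg _))]
  exact mul_le_of_le_one_right (by positivity) ((distInt_le_half _).trans (by norm_num))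

theorem continuous_takagi : Continuous takagi := by
  rw [funext takagi_eq_tsum_distInt]
  exact continuous_tsum (fun k ↦ (continuous_distInt.comp (continuous_const_mul _)).const_mul _)
    summable_geometric_two norm_half_pow_mul_distInt_le

theorem takagi_eq_distInt_add_takagi_two_mul (x : ℝ) :
    takagi x = distInt x + takagi (2 * x) / 2 := by
  have hsum : Summable fun k : ℕ ↦ (1 / 2) ^ k * distInt (2 ^ k * x) :=
    .of_norm_bounded summable_geometric_two fun k ↦ norm_half_pow_mul_distInt_le k x
  rw [takagi_eq_tsum_distInt, takagi_eq_tsum_distInt, hsum.tsum_eq_zero_add, ← tsum_div_const]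
  simp only [pow_zero, one_mul]
  congr! 3 with k
  ring_nf

theorem takagi_intCast (m : ℤ) : takagi m = 0 := by
  have hterm (k : ℕ) : distInt (2 ^ k * m) = 0 := by exact_mod_cast distInt_intCast (2 ^ k * m)
  simp only [takagi_eq_tsum_distInt, hterm, mul_zero, tsum_zero]

theorem takagi_intCast_add_half (m : ℤ) : takagi (m + 1 / 2) = 1 / 2 := by
  have hint : 2 * ((m : ℝ) + 1 / 2) = (2 * m + 1 : ℤ) := by push_cast; ring
  rw [takagi_eq_distInt_add_takagi_two_mul, hint, takagi_intCast, distInt_intCast_add_half]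
  norm_num

theorem secondDiff_takagi (c h : ℝ) :
    secondDiff takagi c h = secondDiff distInt c h + secondDiff takagi (2 * c) (2 * h) / 2 := by
  simp only [secondDiff, ← mul_add, ← mul_sub, two_nsmul]
  rw [takagi_eq_distInt_add_takagi_two_mul (c + h), takagi_eq_distInt_add_takagi_two_mul (c - h),
    takagi_eq_distInt_add_takagi_two_mul c]
  ring

theorem secondDiff_takagi_dyadic_le (n : ℕ) (m : ℤ) :
    secondDiff takagi ((m + 1 / 2) / 2 ^ n) (1 / 2 / 2 ^ n) ≤ -(1 / 2 ^ n) := by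
  induction n with
  | zero =>
    have hadd : (m : ℝ) + 1 / 2 + 1 / 2 = (m + 1 : ℤ) := by push_cast; ring
    simp only [secondDiff, pow_zero, div_one, hadd, add_sub_cancel_right, takagi_intCast,
      takagi_intCast_add_half]
    norm_num
  | succ n ih =>
    have hdouble (y : ℝ) : 2 * (y / 2 ^ (n + 1)) = y / 2 ^ n := by field_simp; ring
    have hconcave := secondDiff_distInt_nonpos m (pow_pos two_pos (n + 1))
    push_cast at hconcave
    rw [secondDiff_takagi, hdouble, hdouble]
    have hhalf : (1 : ℝ) / 2 ^ (n + 1) = 1 / 2 ^ n / 2 := by rw [pow_succ, div_mul_eq_div_div]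
    linarith

theorem abs_dyadic_center_sub_le (n : ℕ) (x : ℝ) :
    |(⌊2 ^ n * x⌋ + 1 / 2) / 2 ^ n - x| ≤ 1 / 2 / 2 ^ n := by
  have hfloor : |⌊2 ^ n * x⌋ + 1 / 2 - 2 ^ n * x| ≤ 1 / 2 :=
    abs_le.mpr ⟨by linarith [Int.lt_floor_add_one (2 ^ n * x)],
      by linarith [Int.floor_le (2 ^ n * x)]⟩
  rw [div_sub' (by positivity), abs_div, abs_of_pos (by positivity : (0 : ℝ) < 2 ^ n)]
  gcongr

theorem not_differentiableAt_takagi (x : ℝ) : ¬ DifferentiableAt ℝ takagi x := by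
  intro hx
  have hstep : Tendsto (fun n : ℕ ↦ (1 / 2 / 2 ^ n : ℝ)) atTop (𝓝 0) :=
    tendsto_const_nhds.div_atTop (tendsto_pow_atTop_atTop_of_one_lt one_lt_two)
  have hcenter : (fun n : ℕ ↦ (⌊2 ^ n * x⌋ + 1 / 2) / 2 ^ n - x) =O[atTop]
      fun n ↦ (1 / 2 / 2 ^ n : ℝ) :=
    .of_norm_le fun n ↦ abs_dyadic_center_sub_le n x
  obtain ⟨n, hn⟩ := ((isLittleO_secondDiff_of_differentiableAt hx hstep hcenter).def one_pos).exists
  rw [one_mul, Real.norm_of_nonneg (by positivity : (0 : ℝ) ≤ 1 / 2 / 2 ^ n)] at hn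
  have hpos : (0 : ℝ) < 1 / 2 / 2 ^ n := by positivity
  have hle : secondDiff takagi ((⌊2 ^ n * x⌋ + 1 / 2) / 2 ^ n) (1 / 2 / 2 ^ n) ≤
      -(2 * (1 / 2 / 2 ^ n)) :=
    (secondDiff_takagi_dyadic_le n ⌊2 ^ n * x⌋).trans_eq (by ring)
  linarith [(abs_le.mp hn).1]

theorem takagi_continuous_nowhere_differentiable :
    Continuous takagi ∧ ∀ x : ℝ, ¬ DifferentiableAt ℝ takagi x :=
  ⟨continuous_takagi, not_differentiableAt_takagi⟩
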